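/- Let (H_•, P_•) be a Hilbert complex of length n, and let its adjoint complex be the Hilbert complex with differentials P*_k : dom(P*_k) ⊆ H_{k+1} → H_k, whose cohomology in degree n−k is ker(P*_{k−1})/ran(P*_k). Then (H_•, P_•) is a Fredholm complex (all its cohomology spaces are finite dimensional) if and only if its adjoint complex is a Fredholm complex; and in that case, for every 0 ≤ k ≤ n, the cohomology spaces ker(P_k)/ran(P_{k−1}) and ker(P*_{k−1})/ran(P*_k) are linearly isomorphic (in particular they have the same finite dimension). -/

import Mathlib

/-!
Write `M = ran(P_{k-1})`, `N = ker(P_k)` and `R = ran(P_k†)`. Since `P_k` is closed and densely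
defined, `N = Rᗮ`, and `ker(P_{k-1}†) = Mᗮ`. If `M` and `R` are closed, orthogonal projection
identifies both `N ⧸ M` and `Mᗮ ⧸ R` with the harmonic space `N ⊓ Mᗮ` (`quotEquivHarmonic`), so
everything reduces to closedness of ranges.

Two facts supply it. A closed operator whose range has finite codimension in a closed subspace has
closed range (`isClosed_pran_of_finite_quotient`, by the open mapping theorem). The closed range
theorem says that `ran T` is closed iff `ran T†` is (`AdjPair.isClosed_pran`); its two implications
are one argument applied to `(T, T†)` and to `(T†, T)`, both of which satisfy the relation
`AdjPair`.
-/

open LinearMap Submodule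

noncomputable section

variable {H : ℕ → Type}
  [∀ k, NormedAddCommGroup (H k)] [∀ k, InnerProductSpace ℂ (H k)]
  [∀ k, CompleteSpace (H k)]

/-- The kernel of a partially defined operator, as a submodule of the ambient space. -/
def pker {E F : Type} [NormedAddCommGroup E] [InnerProductSpace ℂ E]
    [NormedAddCommGroup F] [InnerProductSpace ℂ F] (T : E →ₗ.[ℂ] F) : Submodule ℂ E :=
  (LinearMap.ker T.toFun).map T.domain.subtype

/-- The range of a partially defined operator. -/
def pran {E F : Type} [NormedAddCommGroup E] [InnerProductSpace ℂ E]
    [NormedAddCommGroup F] [InnerProductSpace ℂ F] (T : E →ₗ.[ℂ] F) : Submodule ℂ F :=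
  LinearMap.range T.toFun

/-- `ran(P_{k−1})`, with the convention `P_{−1} = 0`. -/
def prevRange (P : ∀ k, H k →ₗ.[ℂ] H (k + 1)) : ∀ k, Submodule ℂ (H k)
  | 0 => ⊥
  | (k + 1) => pran (P k)

/-- `ker(P*_{k−1})`, with the convention `P_{−1} = 0` (so that it is everything in degree 0). -/
def prevKerAdj (P : ∀ k, H k →ₗ.[ℂ] H (k + 1)) : ∀ k, Submodule ℂ (H k)
  | 0 => ⊤
  | (k + 1) => pker ((P k).adjoint)

/-- The harmonic space `Ĥ^k = ker(P_k) ∩ ker(P*_{k−1})`. -/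
abbrev harmonicSp (P : ∀ k, H k →ₗ.[ℂ] H (k + 1)) (k : ℕ) : Submodule ℂ (H k) :=
  pker (P k) ⊓ prevKerAdj P k


/-- The cohomology of the complex `H^k = ker(P_k)/ran(P_{k−1})`. -/
abbrev cohomQuot (P : ∀ k, H k →ₗ.[ℂ] H (k + 1)) (k : ℕ) :=
  ↥(pker (P k)) ⧸ (prevRange P k).comap (pker (P k)).subtype

/-- The cohomology of the adjoint complex in degree `n−k`, located at `H_k`:
`ker(P*_{k−1})/ran(P*_k)`. -/
abbrev adjCohomQuot (P : ∀ k, H k →ₗ.[ℂ] H (k + 1)) (k : ℕ) :=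
  ↥(prevKerAdj P k) ⧸ (pran ((P k).adjoint)).comap (prevKerAdj P k).subtype

section Helpers

variable {E F : Type} [NormedAddCommGroup E] [InnerProductSpace ℂ E]
  [NormedAddCommGroup F] [InnerProductSpace ℂ F]

lemma mem_pker_iff (T : E →ₗ.[ℂ] F) (x : E) : x ∈ pker T ↔ (x, (0 : F)) ∈ T.graph := by
  constructor
  · rintro ⟨u, hu, rfl⟩
    have hu' : T u = 0 := hu
    rw [← hu']
    exact T.mem_graph u
  · intro h
    obtain ⟨u, hu, hu0⟩ := T.mem_graph_iff.1 h
    exact ⟨u, hu0, hu⟩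

lemma mem_pran_iff (T : E →ₗ.[ℂ] F) (y : F) : y ∈ pran T ↔ ∃ x, (x, y) ∈ T.graph := by
  constructor
  · rintro ⟨u, rfl⟩
    exact ⟨u, T.mem_graph u⟩
  · rintro ⟨x, h⟩
    obtain ⟨u, -, hu⟩ := T.mem_graph_iff.1 h
    exact ⟨u, hu⟩

lemma pran_zero : pran (0 : E →ₗ.[ℂ] F) = ⊥ := by
  rw [eq_bot_iff]
  rintro _ ⟨u, rfl⟩
  rfl

/-- `T` is the maximal formal adjoint of `S`: the graph of `T` consists of all `(w, y)` with
`⟪u, y⟫ = ⟪S u, w⟫` for every `u` in the domain of `S`. The domain of `S` need not be dense. -/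
def AdjPair (S : E →ₗ.[ℂ] F) (T : F →ₗ.[ℂ] E) : Prop :=
  ∀ w y, (w, y) ∈ T.graph ↔ ∀ u v, (u, v) ∈ S.graph → inner ℂ u y = inner ℂ v w

lemma adjPair_adjoint [CompleteSpace E] {T : E →ₗ.[ℂ] F} (hT : Dense (T.domain : Set E)) :
    AdjPair T T.adjoint := by
  intro w y
  rw [LinearPMap.adjoint_graph_eq_graph_adjoint hT, Submodule.mem_adjoint_iff]
  refine forall₃_congr fun u v _ => ?_
  rw [sub_eq_zero, eq_comm]

/-- For `T` closed and densely defined, `T†† = T`: a pair orthogonal to the orthogonal complement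
of the graph of `T`, which is the rotated graph of `T†`, lies in the graph. -/
lemma adjPair_adjoint_symm [CompleteSpace E] [CompleteSpace F] {T : E →ₗ.[ℂ] F}
    (hT : Dense (T.domain : Set E)) (hc : T.IsClosed) : AdjPair T.adjoint T := by
  intro w y
  constructor
  · intro h u v huv
    have := (adjPair_adjoint hT u v).1 huv w y h
    rw [← inner_conj_symm, ← this, inner_conj_symm]
  · intro h
    let G : Submodule ℂ (WithLp 2 (E × F)) :=
      T.graph.comap (WithLp.linearEquiv 2 ℂ (E × F)).toLinearMap
    have hG : IsClosed (G : Set (WithLp 2 (E × F))) :=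
      IsClosed.preimage (WithLp.prod_continuous_ofLp _ _ _) hc
    have : CompleteSpace G := hG.completeSpace_coe
    have key : WithLp.toLp 2 (w, y) ∈ Gᗮᗮ := by
      intro ab hab
      have hadj : (ab.snd, -ab.fst) ∈ T.adjoint.graph := by
        rw [adjPair_adjoint hT]
        intro u v huv
        have h0 : inner ℂ (WithLp.toLp 2 (u, v)) ab = 0 := hab (WithLp.toLp 2 (u, v)) huv
        rw [WithLp.prod_inner_apply] at h0
        rw [inner_neg_right]
        exact neg_eq_of_add_eq_zero_right h0
      have h1 := h _ _ hadj
      rw [WithLp.prod_inner_apply]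
      change inner ℂ ab.fst w + inner ℂ ab.snd y = 0
      rw [h1, inner_neg_left, add_neg_cancel]
    rw [Submodule.orthogonal_orthogonal] at key
    exact key

lemma AdjPair.pker_eq {S : E →ₗ.[ℂ] F} {T : F →ₗ.[ℂ] E} (h : AdjPair S T) :
    pker T = (pran S)ᗮ := by
  ext x
  rw [mem_pker_iff, h, Submodule.mem_orthogonal]
  simp only [mem_pran_iff, inner_zero_right]
  exact ⟨fun H v ⟨u, huv⟩ => (H u v huv).symm, fun H u v huv => (H v ⟨u, huv⟩).symm⟩

/-- If `ran S` is closed, the range of the adjoint is all of `(ker S)ᗮ`. For `y ⊥ ker S` the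
functional `S u ↦ ⟪y, u⟫` on `ran S` is well defined, bounded by the open mapping theorem, and its
Riesz representative is mapped to `y`. -/
lemma AdjPair.pran_eq [CompleteSpace E] [CompleteSpace F] {S : E →ₗ.[ℂ] F} {T : F →ₗ.[ℂ] E}
    (h : AdjPair S T) (hc : S.IsClosed) (hr : IsClosed (pran S : Set F)) :
    pran T = (pker S)ᗮ := by
  apply le_antisymm
  · intro y hy
    obtain ⟨w, hw⟩ := (mem_pran_iff T y).1 hy
    rw [Submodule.mem_orthogonal]
    intro u hu
    rw [(h w y).1 hw u 0 ((mem_pker_iff S u).1 hu), inner_zero_left]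
  · intro y hy
    have hcG : CompleteSpace S.graph := IsClosed.completeSpace_coe (hs := hc)
    have hcR : CompleteSpace (pran S) := hr.completeSpace_coe
    let f : S.graph →L[ℂ] pran S :=
      ((ContinuousLinearMap.snd ℂ E F).comp S.graph.subtypeL).codRestrict (pran S)
        (fun p => (mem_pran_iff S _).2 ⟨p.1.1, p.2⟩)
    have hf : Function.Surjective f := by
      rintro ⟨v, hv⟩
      obtain ⟨u, hu⟩ := (mem_pran_iff S v).1 hv
      exact ⟨⟨(u, v), hu⟩, rfl⟩
    obtain ⟨C, hC, hpre⟩ := f.exists_preimage_norm_le hf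
    choose g hg hgn using hpre
    have hwell : ∀ u v (hv : v ∈ pran S), (u, v) ∈ S.graph →
        inner ℂ y (g ⟨v, hv⟩).1.1 = inner ℂ y u := by
      intro u v hv huv
      have h2 : (g ⟨v, hv⟩).1.2 = v := congrArg Subtype.val (hg ⟨v, hv⟩)
      have h3 : (g ⟨v, hv⟩).1.1 - u ∈ pker S := by
        rw [mem_pker_iff]
        have := S.graph.sub_mem (g ⟨v, hv⟩).2 huv
        rwa [show (g ⟨v, hv⟩).1 - (u, v) = ((g ⟨v, hv⟩).1.1 - u, 0) from
          Prod.ext rfl (by simp [h2])] at this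
      have h4 := Submodule.inner_left_of_mem_orthogonal h3 hy
      rwa [inner_sub_right, sub_eq_zero] at h4
    have hgraph : ∀ r : pran S, ((g r).1.1, (r : F)) ∈ S.graph := by
      intro r
      have h2 : (g r).1.2 = r := congrArg Subtype.val (hg r)
      rw [← h2]
      exact (g r).2
    let φ : pran S →ₗ[ℂ] ℂ :=
      { toFun := fun r => inner ℂ y (g r).1.1
        map_add' := by
          intro r s
          rw [← inner_add_right]
          exact hwell _ _ (r + s).2 (S.graph.add_mem (hgraph r) (hgraph s))
        map_smul' := by
          intro c r
          rw [RingHom.id_apply, smul_eq_mul, ← inner_smul_right]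
          exact hwell _ _ (c • r).2 (S.graph.smul_mem c (hgraph r)) }
    let ψ : pran S →L[ℂ] ℂ := φ.mkContinuous (‖y‖ * C) (by
      intro r
      calc ‖inner ℂ y (g r).1.1‖ ≤ ‖y‖ * ‖(g r).1.1‖ := norm_inner_le_norm _ _
        _ ≤ ‖y‖ * (C * ‖r‖) := by
            gcongr
            exact (norm_fst_le (g r).1).trans (hgn r)
        _ = ‖y‖ * C * ‖r‖ := by ring)
    let w : pran S := (InnerProductSpace.toDual ℂ (pran S)).symm ψ
    rw [mem_pran_iff]
    refine ⟨w, (h _ _).2 fun u v huv => ?_⟩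
    have hv : v ∈ pran S := (mem_pran_iff S v).2 ⟨u, huv⟩
    have h5 : inner ℂ w (⟨v, hv⟩ : pran S) = ψ ⟨v, hv⟩ := InnerProductSpace.toDual_symm_apply
    have h6 : inner ℂ (w : F) v = inner ℂ y u := h5.trans (hwell u v hv huv)
    rw [← inner_conj_symm, ← h6, inner_conj_symm]

lemma AdjPair.isClosed_pran [CompleteSpace E] [CompleteSpace F] {S : E →ₗ.[ℂ] F}
    {T : F →ₗ.[ℂ] E} (h : AdjPair S T) (hc : S.IsClosed) (hr : IsClosed (pran S : Set F)) :
    IsClosed (pran T : Set E) := by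
  rw [h.pran_eq hc hr]
  exact Submodule.isClosed_orthogonal _

/-- With `G` a finite-dimensional algebraic complement of `ran T` in `N`, the map
`graph T × G → N`, `((x, T x), g) ↦ T x + g`, is a continuous surjection of Banach spaces, hence a
quotient map, and the preimage of `ran T` is the closed set `graph T × {0}`. -/
lemma isClosed_pran_of_finite_quotient [CompleteSpace E] [CompleteSpace F] {T : E →ₗ.[ℂ] F}
    (hc : T.IsClosed) {N : Submodule ℂ F} (hN : IsClosed (N : Set F)) (hle : pran T ≤ N)
    (hfin : FiniteDimensional ℂ (N ⧸ (pran T).comap N.subtype)) :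
    IsClosed (pran T : Set F) := by
  have hcG : CompleteSpace T.graph := IsClosed.completeSpace_coe (hs := hc)
  have hcN : CompleteSpace N := hN.completeSpace_coe
  obtain ⟨G, hG⟩ := ((pran T).comap N.subtype).exists_isCompl
  have hGfin : FiniteDimensional ℂ G :=
    (Submodule.quotientEquivOfIsCompl _ G hG).finiteDimensional
  have hGc : CompleteSpace G := FiniteDimensional.complete ℂ G
  let f : T.graph →L[ℂ] N :=
    ((ContinuousLinearMap.snd ℂ E F).comp T.graph.subtypeL).codRestrict N
      (fun p => hle ((mem_pran_iff T _).2 ⟨p.1.1, p.2⟩))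
  have hfmem : ∀ p, f p ∈ (pran T).comap N.subtype := fun p =>
    (mem_pran_iff T _).2 ⟨p.1.1, p.2⟩
  let q : (T.graph × G) →L[ℂ] N := f.coprod G.subtypeL
  have hq : ∀ p g, q (p, g) = f p + g := fun p g => by simp [q]
  have hsurj : Function.Surjective q := by
    intro z
    have hz : z ∈ (pran T).comap N.subtype ⊔ G := by rw [hG.sup_eq_top]; trivial
    obtain ⟨a, ha, b, hb, rfl⟩ := Submodule.mem_sup.1 hz
    obtain ⟨x, hx⟩ := (mem_pran_iff T _).1 ha
    exact ⟨(⟨(x, (a : F)), hx⟩, ⟨b, hb⟩), hq _ _⟩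
  have hquot : Topology.IsQuotientMap q := q.isQuotientMap hsurj
  have hcl : IsClosed (((pran T).comap N.subtype : Submodule ℂ N) : Set N) := by
    rw [← hquot.isClosed_preimage]
    have : q ⁻¹' ((pran T).comap N.subtype : Submodule ℂ N) = {p | p.2 = 0} := by
      ext ⟨p, g⟩
      change q (p, g) ∈ (pran T).comap N.subtype ↔ g = 0
      rw [hq, Submodule.add_mem_iff_right _ (hfmem p)]
      constructor
      · intro hg
        exact Subtype.ext (Submodule.disjoint_def.1 hG.disjoint _ hg g.2)
      · rintro rfl
        exact Submodule.zero_mem _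
    rw [this]
    exact isClosed_singleton.preimage continuous_snd
  have himg := hN.isClosedEmbedding_subtypeVal.isClosedMap _ hcl
  convert himg using 1
  ext x
  exact ⟨fun hx => ⟨⟨x, hle hx⟩, hx, rfl⟩, by rintro ⟨z, hz, rfl⟩; exact hz⟩

/-- For `M ≤ N` with `M` closed, the quotient `N ⧸ M` is represented by the vectors of `N`
orthogonal to `M`. -/
def quotEquivHarmonic [CompleteSpace E] {M N : Submodule ℂ E} (hM : IsClosed (M : Set E))
    (hle : M ≤ N) : (N ⧸ M.comap N.subtype) ≃ₗ[ℂ] ↥(N ⊓ Mᗮ) := by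
  have hcompl : IsCompl (M.comap N.subtype) (Mᗮ.comap N.subtype) := by
    have : CompleteSpace M := hM.completeSpace_coe
    constructor
    · rw [Submodule.disjoint_def]
      intro x hx hx'
      exact Subtype.ext (Submodule.disjoint_def.1 M.orthogonal_disjoint _ hx hx')
    · rw [codisjoint_iff, eq_top_iff]
      intro x _
      have hx : (x : E) ∈ M ⊔ Mᗮ := by
        rw [Submodule.sup_orthogonal_of_hasOrthogonalProjection]; trivial
      obtain ⟨a, ha, b, hb, hab⟩ := Submodule.mem_sup.1 hx
      have hbN : b ∈ N := by
        rw [show b = x - a by rw [← hab]; abel]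
        exact N.sub_mem x.2 (hle ha)
      exact Submodule.mem_sup.2 ⟨⟨a, hle ha⟩, ha, ⟨b, hbN⟩, hb, Subtype.ext hab⟩
  exact (Submodule.quotientEquivOfIsCompl _ _ hcompl).trans
    ((Submodule.equivSubtypeMap N (Mᗮ.comap N.subtype)).trans
      (LinearEquiv.ofEq _ _ (Submodule.map_comap_subtype N Mᗮ)))

end Helpers

lemma prevKerAdj_eq (P : ∀ k, H k →ₗ.[ℂ] H (k + 1))
    (hdense : ∀ k, Dense ((P k).domain : Set (H k))) (k : ℕ) :
    prevKerAdj P k = (prevRange P k)ᗮ := by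
  cases k with
  | zero => exact Submodule.bot_orthogonal_eq_top.symm
  | succ k => exact (adjPair_adjoint (hdense k)).pker_eq

lemma prevRange_le_pker (P : ∀ k, H k →ₗ.[ℂ] H (k + 1))
    (hsub : ∀ k, ∀ x : (P k).domain, ((P k) x) ∈ (P (k + 1)).domain)
    (hcomp : ∀ k, ∀ x : (P k).domain, P (k + 1) ⟨P k x, hsub k x⟩ = 0) (k : ℕ) :
    prevRange P k ≤ pker (P k) := by
  cases k with
  | zero => exact bot_le
  | succ k =>
    rintro _ ⟨x, rfl⟩
    exact ⟨⟨P k x, hsub k x⟩, hcomp k x, rfl⟩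

/-- a Hilbert complex `(H, P)` of length `n` is Fredholm iff its adjoint complex
is Fredholm, in which case the respective cohomologies `ker(P_k)/ran(P_{k−1})` and
`ker(P*_{k−1})/ran(P*_k)` are linearly isomorphic in every degree. -/
theorem fredholm_iff_adjoint_fredholm_and_cohomology_iso
    (n : ℕ) (P : ∀ k, H k →ₗ.[ℂ] H (k + 1))
    (hdense : ∀ k, Dense ((P k).domain : Set (H k)))
    (hclosed : ∀ k, (P k).IsClosed)
    (hsub : ∀ k, ∀ x : (P k).domain, ((P k) x) ∈ (P (k + 1)).domain)
    (hcomp : ∀ k, ∀ x : (P k).domain, P (k + 1) ⟨P k x, hsub k x⟩ = 0)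
    (htop : ∀ k, n ≤ k → P k = 0) :
    ((∀ k ≤ n, FiniteDimensional ℂ (cohomQuot P k)) ↔
      (∀ k ≤ n, FiniteDimensional ℂ (adjCohomQuot P k))) ∧
    ((∀ k ≤ n, FiniteDimensional ℂ (cohomQuot P k)) →
      ∀ k ≤ n, Nonempty (cohomQuot P k ≃ₗ[ℂ] adjCohomQuot P k)) := by
  have hprev := prevKerAdj_eq P hdense
  have hle := prevRange_le_pker P hsub hcomp
  have hker : ∀ k, pker (P k) = (pran (P k).adjoint)ᗮ := fun k =>
    (adjPair_adjoint_symm (hdense k) (hclosed k)).pker_eq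
  have hleAdj : ∀ k, pran (P k).adjoint ≤ prevKerAdj P k := by
    intro k
    rw [hprev]
    exact (Submodule.le_orthogonal_orthogonal _).trans
      (Submodule.orthogonal_le ((hle k).trans (hker k).le))
  have hiso : ∀ k, IsClosed (prevRange P k : Set (H k)) →
      IsClosed (pran (P k).adjoint : Set (H k)) →
      Nonempty (cohomQuot P k ≃ₗ[ℂ] adjCohomQuot P k) := by
    intro k h1 h2
    refine ⟨(quotEquivHarmonic h1 (hle k)).trans
      ((LinearEquiv.ofEq _ _ ?_).trans (quotEquivHarmonic h2 (hleAdj k)).symm)⟩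
    rw [← hprev, ← hker, inf_comm]
  have hfwd : (∀ k ≤ n, FiniteDimensional ℂ (cohomQuot P k)) →
      ∀ k ≤ n, Nonempty (cohomQuot P k ≃ₗ[ℂ] adjCohomQuot P k) := by
    intro hfin
    have hran : ∀ k ≤ n, IsClosed (pran (P k) : Set (H (k + 1))) := by
      intro k hk
      rcases hk.eq_or_lt with rfl | hlt
      · rw [htop k le_rfl, pran_zero]
        exact isClosed_singleton
      · refine isClosed_pran_of_finite_quotient (hclosed k) (N := pker (P (k + 1))) ?_
          (hle (k + 1)) (hfin (k + 1) hlt)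
        rw [hker]
        exact Submodule.isClosed_orthogonal _
    intro k hk
    refine hiso k ?_ ((adjPair_adjoint (hdense k)).isClosed_pran (hclosed k) (hran k hk))
    cases k with
    | zero => exact isClosed_singleton
    | succ k => exact hran k (by omega)
  have hbwd : (∀ k ≤ n, FiniteDimensional ℂ (adjCohomQuot P k)) →
      ∀ k ≤ n, Nonempty (cohomQuot P k ≃ₗ[ℂ] adjCohomQuot P k) := by
    intro hfin
    have hranAdj : ∀ k ≤ n, IsClosed (pran (P k).adjoint : Set (H k)) := by
      intro k hk
      refine isClosed_pran_of_finite_quotient (LinearPMap.adjoint_isClosed (hdense k))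
        (N := prevKerAdj P k) ?_ (hleAdj k) (hfin k hk)
      rw [hprev]
      exact Submodule.isClosed_orthogonal _
    intro k hk
    refine hiso k ?_ (hranAdj k hk)
    cases k with
    | zero => exact isClosed_singleton
    | succ k =>
      exact (adjPair_adjoint_symm (hdense k) (hclosed k)).isClosed_pran
        (LinearPMap.adjoint_isClosed (hdense k)) (hranAdj k (by omega))
  refine ⟨⟨fun hfin k hk => ?_, fun hfin k hk => ?_⟩, hfwd⟩
  · obtain ⟨e⟩ := hfwd hfin k hk
    have := hfin k hk
    exact e.finiteDimensional
  · obtain ⟨e⟩ := hbwd hfin k hk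
    have := hfin k hk
    exact e.symm.finiteDimensional
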